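/- Let C be an E∞-pair algebra, B a C-algebra with unit u: C → B, and let I_C(B) ⊆ h₀C be the kernel of the ring homomorphism h₀u: h₀C → h₀B. For x ∈ C_{n,0} whose class lies in I_C(B) and y ∈ B_{n,1} with ∂(y) = u₀(x), let θ_{(x,y)}: h₀B → h₁B be the degree-n derivation θ_{(x,y)}(a) = −y·ā + (−1)^{n·|a|} ā·y + x ⌣₁ ā. Then: (i) the class of θ_{(x,y)} modulo inner derivations is independent of the choice of y and depends only on the class of x in I_C(B); (ii) for z ∈ C_{m,0} representing c ∈ h₀C one has θ_{(z·x, u₀(z)·y)}(a) = (h₀u)(c)·θ_{(x,y)}(a) for all a ∈ h₀B; (iii) consequently the induced map θ: I_C(B)/I_C(B)² → Der(h₀B, h₁B)/Inn(h₀B, h₁B) is a well-defined h₀C-module homomorphism; and (iv) if B itself carries an E∞-pair algebra structure ⌣₁ᴮ, u is a morphism of E∞-pair algebras, and the external cup-one products are given by x̃ ⌣₁ x = u₀(x̃) ⌣₁ᴮ x and x ⌣₁ x̃ = x ⌣₁ᴮ u₀(x̃), then θ_{(x,y)} = 0 identically. -/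

import Mathlib

/-!
The derivation `θ_{(x,y)}` measures the failure of `y` to satisfy the cup-one law
`∂(s) ⌣₁ a = s·a - (-1)^{|s||a|} a·s` (`cup_d`), which would compute `u₀(x) ⌣₁ a` from `∂ y = u₀ x`
if `B` were itself an E∞-pair algebra; in that case it vanishes, which
is (iv).

* (i): if `x - x' = ∂ c`, then `node` writes `(x - x') ⌣₁ a` as the graded commutator of `u₁(c)`
  with `a`, so `θ_{(x,y)} - θ_{(x',y')}` is the inner derivation of the cycle `u₁(c) - (y - y')`.
* (ii): `(z·x) ⌣₁ a` expands by `otrolin` into `± (z ⌣₁ a)·u₀(x) + u₀(z)·(x ⌣₁ a)`. As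
  `u₀(x) = ∂ y`, the first term is `± ∂(z ⌣₁ a)·y`, a graded commutator of `u₀(z)` and `a` acting
  on `y` (`cup_smulr_d`). Its part `a·u₀(z)·y` cancels against `θ`, and what is left is
  `u₀(z)·θ_{(x,y)}(a)`.
* (iii): `θ_{(x,y)}` takes values in cycles (`d_theta`), and boundaries annihilate cycles because
  `∂ s · t = s · ∂ t`. So for `u₀(z) = ∂ s` the choice `y = u₀(z)·t` gives `θ_{(z·w, y)} = 0` by (ii).
  Thus every element of `I_C(B)²` has a lift `y` with `θ_{(x,y)} = 0`
  (`exists_theta_eq_zero_of_mem_closure`), and (i) covers every other choice.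
-/

/-- An ℕ-graded pair algebra: an ℕ-graded ring `B_{*,0}` (given by the family `B0` with
degreewise-defined multiplication `mul`), an ℕ-graded `B_{*,0}`-bimodule `B_{*,1}` (the
family `B1` with actions `smul`, `smulr`) and a bimodule homomorphism `∂ : B_{*,1} → B_{*,0}`
satisfying `∂(a)·b = a·∂(b)`.  Multiplications are indexed by a proof `p + q = r` recording
the additivity of degrees. -/
structure PairAlgebra (B0 B1 : ℕ → Type*)
    [∀ n, AddCommGroup (B0 n)] [∀ n, AddCommGroup (B1 n)] where
  d : ∀ n, B1 n →+ B0 n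
  mul : ∀ {p q r : ℕ}, p + q = r → B0 p → B0 q → B0 r
  smul : ∀ {p q r : ℕ}, p + q = r → B0 p → B1 q → B1 r
  smulr : ∀ {p q r : ℕ}, p + q = r → B1 p → B0 q → B1 r
  one : B0 0
  mul_add : ∀ {p q r : ℕ} (h : p + q = r) (x : B0 p) (y y' : B0 q),
    mul h x (y + y') = mul h x y + mul h x y'
  add_mul : ∀ {p q r : ℕ} (h : p + q = r) (x x' : B0 p) (y : B0 q),
    mul h (x + x') y = mul h x y + mul h x' y
  smul_add : ∀ {p q r : ℕ} (h : p + q = r) (x : B0 p) (s s' : B1 q),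
    smul h x (s + s') = smul h x s + smul h x s'
  add_smul : ∀ {p q r : ℕ} (h : p + q = r) (x x' : B0 p) (s : B1 q),
    smul h (x + x') s = smul h x s + smul h x' s
  smulr_add : ∀ {p q r : ℕ} (h : p + q = r) (s : B1 p) (x x' : B0 q),
    smulr h s (x + x') = smulr h s x + smulr h s x'
  add_smulr : ∀ {p q r : ℕ} (h : p + q = r) (s s' : B1 p) (x : B0 q),
    smulr h (s + s') x = smulr h s x + smulr h s' x
  one_mul : ∀ {q : ℕ} (x : B0 q), mul (Nat.zero_add q) one x = x
  mul_one : ∀ {p : ℕ} (x : B0 p), mul rfl x one = x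
  one_smul : ∀ {q : ℕ} (s : B1 q), smul (Nat.zero_add q) one s = s
  smulr_one : ∀ {p : ℕ} (s : B1 p), smulr rfl s one = s
  mul_assoc : ∀ {p q r : ℕ} (x : B0 p) (y : B0 q) (z : B0 r),
    mul rfl (mul rfl x y) z = mul (Nat.add_assoc p q r).symm x (mul rfl y z)
  mul_smul_assoc : ∀ {p q r : ℕ} (x : B0 p) (y : B0 q) (s : B1 r),
    smul rfl (mul rfl x y) s = smul (Nat.add_assoc p q r).symm x (smul rfl y s)
  smul_smulr_assoc : ∀ {p q r : ℕ} (x : B0 p) (s : B1 q) (y : B0 r),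
    smulr rfl (smul rfl x s) y = smul (Nat.add_assoc p q r).symm x (smulr rfl s y)
  smulr_mul_assoc : ∀ {p q r : ℕ} (s : B1 p) (y : B0 q) (z : B0 r),
    smulr rfl (smulr rfl s y) z = smulr (Nat.add_assoc p q r).symm s (mul rfl y z)
  d_smul : ∀ {p q r : ℕ} (h : p + q = r) (x : B0 p) (s : B1 q),
    d r (smul h x s) = mul h x (d q s)
  d_smulr : ∀ {p q r : ℕ} (h : p + q = r) (s : B1 p) (x : B0 q),
    d r (smulr h s x) = mul h (d p s) x
  smul_d : ∀ {p q r : ℕ} (h : p + q = r) (s : B1 p) (t : B1 q),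
    smul h (d p s) t = smulr h s (d q t)

variable {B0 B1 : ℕ → Type*} [∀ n, AddCommGroup (B0 n)] [∀ n, AddCommGroup (B1 n)]

/-- A cup-one product turning the pair algebra `A` into an E∞-pair algebra: an additive
operation `⌣₁ : B_{p,0} ⊗ B_{q,0} → B_{p+q,1}` measuring the commutativity of `A` and
satisfying the four laws of an E∞-pair algebra. -/
structure EInftyCup (A : PairAlgebra B0 B1) where
  cup : ∀ {p q r : ℕ}, p + q = r → B0 p → B0 q → B1 r
  cup_add_left : ∀ {p q r : ℕ} (h : p + q = r) (x x' : B0 p) (y : B0 q),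
    cup h (x + x') y = cup h x y + cup h x' y
  cup_add_right : ∀ {p q r : ℕ} (h : p + q = r) (x : B0 p) (y y' : B0 q),
    cup h x (y + y') = cup h x y + cup h x y'
  cup_comm_mul : ∀ {p q r : ℕ} (h : p + q = r) (x₁ : B0 p) (x₂ : B0 q),
    ((-1 : ℤ) ^ (p * q)) • A.mul ((Nat.add_comm q p).trans h) x₂ x₁ + A.d r (cup h x₁ x₂)
      = A.mul h x₁ x₂
  cup_d : ∀ {p q r : ℕ} (h : p + q = r) (s : B1 p) (x₂ : B0 q),
    ((-1 : ℤ) ^ (p * q)) • A.smul ((Nat.add_comm q p).trans h) x₂ s + cup h (A.d p s) x₂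
      = A.smulr h s x₂
  cup_skew : ∀ {p q r : ℕ} (h : p + q = r) (x₁ : B0 p) (x₂ : B0 q),
    ((-1 : ℤ) ^ (p * q)) • cup ((Nat.add_comm q p).trans h) x₂ x₁ + cup h x₁ x₂ = 0
  cup_mul : ∀ {p q r : ℕ} (x₁ : B0 p) (x₂ : B0 q) (x₃ : B0 r),
    cup rfl (A.mul rfl x₁ x₂) x₃
      = ((-1 : ℤ) ^ (q * r)) •
          A.smulr (by omega : p + r + q = p + q + r) (cup rfl x₁ x₃) x₂
        + A.smul (by omega : p + (q + r) = p + q + r) x₁ (cup rfl x₂ x₃)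

variable {C0 C1 A0 A1 : ℕ → Type*}
variable [∀ n, AddCommGroup (C0 n)] [∀ n, AddCommGroup (C1 n)]
variable [∀ n, AddCommGroup (A0 n)] [∀ n, AddCommGroup (A1 n)]

/-- An algebra `B` over an E∞-pair algebra `(C, Ccup)`: a pair algebra `B` together with a
unit morphism `u : C → B` of pair algebras and external cup-one products
`⌣₁ : B_{n,0} × C_{m,0} → B_{n+m,1}` (`cupBC`) and `⌣₁ : C_{n,0} × B_{m,0} → B_{n+m,1}`
(`cupCB`), additive in each variable, satisfying the seven compatibility laws. -/
structure CAlgebra (C : PairAlgebra C0 C1) (Ccup : EInftyCup C)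
    (B : PairAlgebra A0 A1) where
  u0 : ∀ n, C0 n →+ A0 n
  u1 : ∀ n, C1 n →+ A1 n
  u_d : ∀ (n : ℕ) (s : C1 n), B.d n (u1 n s) = u0 n (C.d n s)
  u0_one : u0 0 C.one = B.one
  u0_mul : ∀ {p q r : ℕ} (h : p + q = r) (x : C0 p) (y : C0 q),
    u0 r (C.mul h x y) = B.mul h (u0 p x) (u0 q y)
  u1_smul : ∀ {p q r : ℕ} (h : p + q = r) (x : C0 p) (s : C1 q),
    u1 r (C.smul h x s) = B.smul h (u0 p x) (u1 q s)
  u1_smulr : ∀ {p q r : ℕ} (h : p + q = r) (s : C1 p) (x : C0 q),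
    u1 r (C.smulr h s x) = B.smulr h (u1 p s) (u0 q x)
  cupBC : ∀ {p q r : ℕ}, p + q = r → A0 p → C0 q → A1 r
  cupCB : ∀ {p q r : ℕ}, p + q = r → C0 p → A0 q → A1 r
  cupBC_add_left : ∀ {p q r : ℕ} (h : p + q = r) (x x' : A0 p) (y : C0 q),
    cupBC h (x + x') y = cupBC h x y + cupBC h x' y
  cupBC_add_right : ∀ {p q r : ℕ} (h : p + q = r) (x : A0 p) (y y' : C0 q),
    cupBC h x (y + y') = cupBC h x y + cupBC h x y'
  cupCB_add_left : ∀ {p q r : ℕ} (h : p + q = r) (x x' : C0 p) (y : A0 q),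
    cupCB h (x + x') y = cupCB h x y + cupCB h x' y
  cupCB_add_right : ∀ {p q r : ℕ} (h : p + q = r) (x : C0 p) (y y' : A0 q),
    cupCB h x (y + y') = cupCB h x y + cupCB h x y'
  -- u₁(x̃₁ ⌣₁ x̃₂) = u₀(x̃₁) ⌣₁ x̃₂ = x̃₁ ⌣₁ u₀(x̃₂)
  u_cup_BC : ∀ {p q r : ℕ} (h : p + q = r) (x : C0 p) (y : C0 q),
    u1 r (Ccup.cup h x y) = cupBC h (u0 p x) y
  u_cup_CB : ∀ {p q r : ℕ} (h : p + q = r) (x : C0 p) (y : C0 q),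
    u1 r (Ccup.cup h x y) = cupCB h x (u0 q y)
  -- (−1)^{pq} x₂·u₀(x̃₁) + ∂(x̃₁ ⌣₁ x₂) = u₀(x̃₁)·x₂
  loes : ∀ {p q r : ℕ} (h : p + q = r) (xt : C0 p) (x : A0 q),
    ((-1 : ℤ) ^ (p * q)) • B.mul ((Nat.add_comm q p).trans h) x (u0 p xt)
      + B.d r (cupCB h xt x) = B.mul h (u0 p xt) x
  -- (−1)^{pq} u₀(x̃₂)·s + ∂(s) ⌣₁ x̃₂ = s·u₀(x̃₂)
  biende : ∀ {p q r : ℕ} (h : p + q = r) (s : A1 p) (xt : C0 q),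
    ((-1 : ℤ) ^ (p * q)) • B.smul ((Nat.add_comm q p).trans h) (u0 q xt) s
      + cupBC h (B.d p s) xt = B.smulr h s (u0 q xt)
  -- (−1)^{pq} x₂·u₁(s̃) + ∂(s̃) ⌣₁ x₂ = u₁(s̃)·x₂
  node : ∀ {p q r : ℕ} (h : p + q = r) (st : C1 p) (x : A0 q),
    ((-1 : ℤ) ^ (p * q)) • B.smul ((Nat.add_comm q p).trans h) x (u1 p st)
      + cupCB h (C.d p st) x = B.smulr h (u1 p st) x
  -- (−1)^{pq} x₂ ⌣₁ x̃₁ + x̃₁ ⌣₁ x₂ = 0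
  comi : ∀ {p q r : ℕ} (h : p + q = r) (xt : C0 p) (x : A0 q),
    ((-1 : ℤ) ^ (p * q)) • cupBC ((Nat.add_comm q p).trans h) x xt + cupCB h xt x = 0
  -- (x̃₁·x̃₂) ⌣₁ x₃ = (−1)^{qr} (x̃₁ ⌣₁ x₃)·u₀(x̃₂) + u₀(x̃₁)·(x̃₂ ⌣₁ x₃)
  otrolin : ∀ {p q r : ℕ} (x₁ : C0 p) (x₂ : C0 q) (x₃ : A0 r),
    cupCB rfl (C.mul rfl x₁ x₂) x₃
      = ((-1 : ℤ) ^ (q * r)) •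
          B.smulr (by omega : p + r + q = p + q + r) (cupCB rfl x₁ x₃) (u0 q x₂)
        + B.smul (by omega : p + (q + r) = p + q + r) (u0 p x₁) (cupCB rfl x₂ x₃)
  -- (x₁·x₂) ⌣₁ x̃₃ = (−1)^{qr} (x₁ ⌣₁ x̃₃)·x₂ + x₁·(x₂ ⌣₁ x̃₃)
  isder : ∀ {p q r : ℕ} (x₁ : A0 p) (x₂ : A0 q) (x₃ : C0 r),
    cupBC rfl (B.mul rfl x₁ x₂) x₃
      = ((-1 : ℤ) ^ (q * r)) •
          B.smulr (by omega : p + r + q = p + q + r) (cupBC rfl x₁ x₃) x₂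
        + B.smul (by omega : p + (q + r) = p + q + r) x₁ (cupBC rfl x₂ x₃)

variable {C : PairAlgebra C0 C1} {Ccup : EInftyCup C} {B : PairAlgebra A0 A1}

/-- The map `θ_{(x,y)}` on representatives:
`θ_{(x,y)}(ā) = −y·ā + (−1)^{n·|ā|} ā·y + x ⌣₁ ā`. -/
def theta (CA : CAlgebra C Ccup B) (n : ℕ) (x : C0 n) (y : A1 n)
    (k : ℕ) (ab : A0 k) : A1 (n + k) :=
  -(B.smulr rfl y ab) + ((-1 : ℤ) ^ (n * k)) • B.smul (Nat.add_comm k n) ab y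
    + CA.cupCB rfl x ab

/-- Two degree-`n` maps `θ₁, θ₂ : h₀B → h₁B` (given on representatives) differ by an inner
derivation: there is a homogeneous `m ∈ h₁B_n` with
`θ₁(a) − θ₂(a) = m·a − (−1)^{|m||a|} a·m`. -/
def differByInner (B : PairAlgebra A0 A1) (n : ℕ)
    (θ₁ θ₂ : ∀ k : ℕ, A0 k → A1 (n + k)) : Prop :=
  ∃ m : A1 n, B.d n m = 0 ∧
    ∀ (k : ℕ) (ab : A0 k),
      θ₁ k ab - θ₂ k ab =
        B.smulr rfl m ab - ((-1 : ℤ) ^ (n * k)) • B.smul (Nat.add_comm k n) ab m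

/-- Homogeneous degree-`n` products of two homogeneous elements of the ideal
`I_C(B) = Ker (h₀u)` (on representatives: `u₀` of the element is a boundary in `B`).
The additive closure of this set, together with boundaries, represents `I_C(B)²`. -/
def IsqSet (CA : CAlgebra C Ccup B) (n : ℕ) : Set (C0 n) :=
  {v | ∃ (i j : ℕ) (h : i + j = n) (z : C0 i) (w : C0 j),
    (∃ s : A1 i, B.d i s = CA.u0 i z) ∧ (∃ t : A1 j, B.d j t = CA.u0 j w) ∧
    v = C.mul h z w}

namespace PairAlgebra

theorem smul_neg' (B : PairAlgebra A0 A1) {p q r : ℕ} (h : p + q = r) (x : A0 p) (s : A1 q) :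
    B.smul h x (-s) = -B.smul h x s :=
  (AddMonoidHom.mk' (fun s => B.smul h x s) (B.smul_add h x)).map_neg s

theorem smul_zsmul' (B : PairAlgebra A0 A1) {p q r : ℕ} (h : p + q = r) (x : A0 p) (c : ℤ)
    (s : A1 q) : B.smul h x (c • s) = c • B.smul h x s :=
  (AddMonoidHom.mk' (fun s => B.smul h x s) (B.smul_add h x)).map_zsmul c s

theorem neg_smul' (B : PairAlgebra A0 A1) {p q r : ℕ} (h : p + q = r) (x : A0 p) (s : A1 q) :
    B.smul h (-x) s = -B.smul h x s :=
  (AddMonoidHom.mk' (fun x => B.smul h x s) (fun x x' => B.add_smul h x x' s)).map_neg x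

theorem zsmul_smul' (B : PairAlgebra A0 A1) {p q r : ℕ} (h : p + q = r) (c : ℤ) (x : A0 p)
    (s : A1 q) : B.smul h (c • x) s = c • B.smul h x s :=
  (AddMonoidHom.mk' (fun x => B.smul h x s) (fun x x' => B.add_smul h x x' s)).map_zsmul c x

theorem neg_smulr' (B : PairAlgebra A0 A1) {p q r : ℕ} (h : p + q = r) (s : A1 p) (x : A0 q) :
    B.smulr h (-s) x = -B.smulr h s x :=
  (AddMonoidHom.mk' (fun s => B.smulr h s x) (fun s s' => B.add_smulr h s s' x)).map_neg s

/-- Associativity of the left action for arbitrary proofs of the degree equations. -/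
theorem mul_smul' (B : PairAlgebra A0 A1) {p q r pq qr t : ℕ} (h₁ : p + q = pq) (h₂ : pq + r = t)
    (h₃ : q + r = qr) (h₄ : p + qr = t) (x : A0 p) (y : A0 q) (s : A1 r) :
    B.smul h₂ (B.mul h₁ x y) s = B.smul h₄ x (B.smul h₃ y s) := by
  subst h₁ h₂ h₃
  exact B.mul_smul_assoc x y s

/-- Compatibility of the left and right actions for arbitrary proofs of the degree equations. -/
theorem smul_smulr' (B : PairAlgebra A0 A1) {p q r pq qr t : ℕ} (h₁ : p + q = pq)
    (h₂ : pq + r = t) (h₃ : q + r = qr) (h₄ : p + qr = t) (x : A0 p) (s : A1 q) (y : A0 r) :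
    B.smulr h₂ (B.smul h₁ x s) y = B.smul h₄ x (B.smulr h₃ s y) := by
  subst h₁ h₂ h₃
  exact B.smul_smulr_assoc x s y

end PairAlgebra

theorem cupCB_neg_left (CA : CAlgebra C Ccup B) {p q r : ℕ} (h : p + q = r) (x : C0 p)
    (a : A0 q) : CA.cupCB h (-x) a = -CA.cupCB h x a :=
  (AddMonoidHom.mk' (fun x => CA.cupCB h x a)
    (fun x x' => CA.cupCB_add_left h x x' a)).map_neg x

theorem theta_add (CA : CAlgebra C Ccup B) (n : ℕ) (x x' : C0 n) (y y' : A1 n)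
    (k : ℕ) (a : A0 k) :
    theta CA n (x + x') (y + y') k a = theta CA n x y k a + theta CA n x' y' k a := by
  simp only [theta, B.add_smulr, B.smul_add, CA.cupCB_add_left, smul_add]
  abel

theorem theta_neg (CA : CAlgebra C Ccup B) (n : ℕ) (x : C0 n) (y : A1 n)
    (k : ℕ) (a : A0 k) : theta CA n (-x) (-y) k a = -theta CA n x y k a := by
  simp only [theta, B.neg_smulr', B.smul_neg', cupCB_neg_left, smul_neg]
  abel

/-- `θ_{(x,y)}` takes values in `h₁B = Ker ∂`. -/
theorem d_theta (CA : CAlgebra C Ccup B) (n : ℕ) (x : C0 n) (y : A1 n)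
    (hy : B.d n y = CA.u0 n x) (k : ℕ) (a : A0 k) : B.d (n + k) (theta CA n x y k a) = 0 := by
  simp only [theta, map_add, map_neg, map_zsmul, B.d_smul, B.d_smulr, hy]
  rw [← CA.loes rfl x a]
  abel

/-- If `∂ y = u₀ x`, then `(z ⌣₁ a)·u₀(x) = ∂(z ⌣₁ a)·y` is the graded commutator of `u₀(z)` and `a`
applied to `y`. -/
theorem cup_smulr_d (CA : CAlgebra C Ccup B) {m n k t : ℕ} (z : C0 m) (x : C0 n) (y : A1 n)
    (hy : B.d n y = CA.u0 n x) (a : A0 k) (h : m + k + n = t) (hnk : k + n = n + k)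
    (hm : m + (n + k) = t) (hk : k + (m + n) = t) :
    B.smulr h (CA.cupCB rfl z a) (CA.u0 n x)
      = B.smul hm (CA.u0 m z) (B.smul hnk a y)
        - ((-1 : ℤ) ^ (m * k)) • B.smul hk a (B.smul rfl (CA.u0 m z) y) := by
  have hd : B.d (m + k) (CA.cupCB rfl z a) = B.mul rfl (CA.u0 m z) a
      + -(((-1 : ℤ) ^ (m * k)) • B.mul (Nat.add_comm k m) a (CA.u0 m z)) := by
    rw [← CA.loes rfl z a]
    abel
  rw [← hy, ← B.smul_d, hd, B.add_smul, B.neg_smul', B.zsmul_smul',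
    B.mul_smul' rfl h hnk hm, B.mul_smul' (Nat.add_comm k m) h rfl hk, sub_eq_add_neg]

theorem theta_mul (CA : CAlgebra C Ccup B) (m n : ℕ) (z : C0 m) (x : C0 n) (y : A1 n)
    (hy : B.d n y = CA.u0 n x) (k : ℕ) (a : A0 k) (hm : m + (n + k) = m + n + k) :
    theta CA (m + n) (C.mul rfl z x) (B.smul rfl (CA.u0 m z) y) k a
      = B.smul hm (CA.u0 m z) (theta CA n x y k a) := by
  have hsign : ((-1 : ℤ) ^ ((m + n) * k)) = (-1) ^ (n * k) * (-1) ^ (m * k) := by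
    rw [Nat.add_mul, pow_add, mul_comm]
  simp only [theta]
  rw [CA.otrolin, cup_smulr_d CA z x y hy a _ (Nat.add_comm k n) hm (Nat.add_comm k (m + n)),
    B.smul_add, B.smul_add, B.smul_neg', B.smul_zsmul', B.smul_smulr' rfl rfl rfl hm,
    smul_sub, smul_smul, hsign]
  abel

/-- Every element of `I_C(B)²` admits a lift `y` for which `θ_{(x,y)}` vanishes identically. -/
theorem exists_theta_eq_zero_of_mem_closure (CA : CAlgebra C Ccup B) (n : ℕ) (x : C0 n)
    (hx : x ∈ AddSubgroup.closure (IsqSet CA n)) :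
    ∃ y : A1 n, B.d n y = CA.u0 n x ∧ ∀ (k : ℕ) (a : A0 k), theta CA n x y k a = 0 := by
  induction hx using AddSubgroup.closure_induction with
  | mem v hv =>
    obtain ⟨i, j, h, z, w, ⟨s, hs⟩, ⟨t, ht⟩, rfl⟩ := hv
    subst h
    refine ⟨B.smul rfl (CA.u0 i z) t, by rw [B.d_smul, ht, CA.u0_mul], fun k a => ?_⟩
    have hm : i + (j + k) = i + j + k := by omega
    have hzero : B.smulr hm s (0 : A0 (j + k)) = 0 :=
      (AddMonoidHom.mk' (fun b => B.smulr hm s b) (B.smulr_add hm s)).map_zero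
    rw [theta_mul CA i j z w t ht k a hm, ← hs, B.smul_d, d_theta CA j w t ht, hzero]
  | zero =>
    refine ⟨0, by simp, fun k a => ?_⟩
    simpa using theta_add CA n 0 0 0 0 k a
  | add v w _ _ hv hw =>
    obtain ⟨y, hy, hy0⟩ := hv
    obtain ⟨y', hy', hy0'⟩ := hw
    exact ⟨y + y', by rw [map_add, map_add, hy, hy'],
      fun k a => by rw [theta_add, hy0, hy0', add_zero]⟩
  | neg v _ hv =>
    obtain ⟨y, hy, hy0⟩ := hv
    exact ⟨-y, by rw [map_neg, map_neg, hy], fun k a => by rw [theta_neg, hy0, neg_zero]⟩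

theorem theta_differByInner (CA : CAlgebra C Ccup B) (n : ℕ) (x x' : C0 n) (y y' : A1 n)
    (c : C1 n) (hy : B.d n y = CA.u0 n x) (hy' : B.d n y' = CA.u0 n x')
    (hc : C.d n c = x - x') :
    differByInner B n (theta CA n x y) (theta CA n x' y') := by
  refine ⟨CA.u1 n c + (-y + y'), ?_, fun k a => ?_⟩
  · rw [map_add, map_add, map_neg, CA.u_d, hc, hy, hy', map_sub]
    abel
  · have hx : x = C.d n c + x' := by rw [hc, sub_add_cancel]
    simp only [theta, B.add_smulr, B.neg_smulr', B.smul_add, B.smul_neg', smul_add, smul_neg]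
    rw [← CA.node rfl c a, hx, CA.cupCB_add_left]
    abel

/-- properties of `θ : I_C(B)/I_C(B)² → HH¹(h₀B, h₁B)`:
(i) the class of `θ_{(x,y)}` modulo inner derivations depends only on the class of `x`;
(ii) `θ_{(z·x, u₀(z)·y)}(a) = (h₀u)(z)·θ_{(x,y)}(a)`, so `θ` is `h₀C`-linear;
(iii) `θ` vanishes on `I_C(B)²`, and is additive, so it is a well-defined `h₀C`-module
homomorphism `I_C(B)/I_C(B)² → Der/Inn`;
(iv) if `B` carries an E∞-structure through which `u` and the external cup-one products
factor, then `θ_{(x,y)} = 0` identically. -/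
theorem cAlgebra_theta_hochschild (CA : CAlgebra C Ccup B) (n : ℕ) :
    -- (i) independence of the choices of `y` and of the representative `x`
    (∀ (x x' : C0 n) (y y' : A1 n) (ct : C1 n),
      B.d n y = CA.u0 n x → B.d n y' = CA.u0 n x' → C.d n ct = x - x' →
      differByInner B n (theta CA n x y) (theta CA n x' y')) ∧
    -- (ii) h₀C-linearity
    (∀ (m : ℕ) (z : C0 m) (x : C0 n) (y : A1 n), B.d n y = CA.u0 n x →
      ∀ (k : ℕ) (ab : A0 k),
        theta CA (m + n) (C.mul rfl z x) (B.smul rfl (CA.u0 m z) y) k ab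
          = B.smul (by omega : m + (n + k) = m + n + k) (CA.u0 m z)
              (theta CA n x y k ab)) ∧
    -- (iii) vanishing on I_C(B)² (together with (i), (ii) and additivity this makes θ a
    -- well-defined h₀C-module homomorphism I_C(B)/I_C(B)² → Der/Inn)
    (∀ (x : C0 n) (y : A1 n), B.d n y = CA.u0 n x →
      x ∈ AddSubgroup.closure (IsqSet CA n) ⊔ (C.d n).range →
      differByInner B n (theta CA n x y) (fun _ _ => 0)) ∧
    (∀ (x x' : C0 n) (y y' : A1 n), B.d n y = CA.u0 n x → B.d n y' = CA.u0 n x' →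
      ∀ (k : ℕ) (ab : A0 k),
        theta CA n (x + x') (y + y') k ab = theta CA n x y k ab + theta CA n x' y' k ab) ∧
    -- (iv) vanishing in the E∞ case
    (∀ Bcup : EInftyCup B,
      (∀ (p q r : ℕ) (h : p + q = r) (xt : C0 p) (yt : C0 q),
        CA.u1 r (Ccup.cup h xt yt) = Bcup.cup h (CA.u0 p xt) (CA.u0 q yt)) →
      (∀ (p q r : ℕ) (h : p + q = r) (xt : C0 p) (a : A0 q),
        CA.cupCB h xt a = Bcup.cup h (CA.u0 p xt) a) →
      (∀ (p q r : ℕ) (h : p + q = r) (a : A0 p) (xt : C0 q),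
        CA.cupBC h a xt = Bcup.cup h a (CA.u0 q xt)) →
      ∀ (x : C0 n) (y : A1 n), B.d n y = CA.u0 n x →
        ∀ (k : ℕ) (ab : A0 k), theta CA n x y k ab = 0) := by
  refine ⟨fun x x' y y' ct hy hy' hc => theta_differByInner CA n x x' y y' ct hy hy' hc,
    fun m z x y hy k ab => theta_mul CA m n z x y hy k ab _, ?_,
    fun x x' y y' _ _ k ab => theta_add CA n x x' y y' k ab, ?_⟩
  · intro x y hy hx
    obtain ⟨v, hv, _, ⟨c, rfl⟩, rfl⟩ := AddSubgroup.mem_sup.mp hx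
    obtain ⟨y', hy', h0⟩ := exists_theta_eq_zero_of_mem_closure CA n v hv
    obtain ⟨e, he, heq⟩ := theta_differByInner CA n (v + C.d n c) v y y' c hy hy'
      (add_sub_cancel_left v (C.d n c)).symm
    exact ⟨e, he, fun k a => by rw [← heq k a, h0]⟩
  · intro Bcup _ hCB _ x y hy k ab
    rw [theta, hCB, ← hy, ← Bcup.cup_d rfl y ab]
    abel
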